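/- arXiv:2206.09525 — 2 statements merged into one kernel-verified Lean document; each statement's English description precedes it below -/
import Mathlib

section
/- Let T ⊂ ℝ³ be a tetrahedron with affinely independent vertices v₀, v₁, v₂, v₃. Let r^v ≥ 1 be an integer, set r₂ = (r^v, 0, −1), and let k ≥ 2r^v + 1; set r₃ = r₂ ⊖ 1 = (r^v−1, −1, −1). Assume S₃(T, r₃, k−1) is nonempty. Then {div u : u ∈ 𝔹_k^{div}(T; r₂)} = {p ∈ B_{k−1}(T; r₃) : ∫_T p dx = 0}, where 𝔹_k^{div}(T; r₂) = {u ∈ 𝔹_k³(T; r₂) : u·n = 0 on ∂T}. -/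
open scoped BigOperators
open MeasureTheory

/-- The interior lattice set `S₃(T, r, k)` for a smoothness vector `r = (rᵛ, rᵉ, r^f)`. -/
def interiorLattice (k : ℕ) (rv re rf : ℤ) : Set (Fin 4 → ℕ) :=
  {α | ∑ i, α i = k ∧ ∀ f : Finset (Fin 4), f.Nonempty → f ≠ Finset.univ →
    ((f.card = 1 → rv < ∑ i ∈ fᶜ, (α i : ℤ)) ∧
     (f.card = 2 → re < ∑ i ∈ fᶜ, (α i : ℤ)) ∧
     (f.card = 3 → rf < ∑ i ∈ fᶜ, (α i : ℤ)))}

/-- The Bernstein monomial `λ^α` on `ℝ³`. -/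
def bernBary3 (lam : Fin 4 → ((Fin 3 → ℝ) →ᵃ[ℝ] ℝ)) (α : Fin 4 → ℕ) :
    (Fin 3 → ℝ) → ℝ :=
  fun x => ∏ i, (lam i x) ^ (α i)

/-- The bubble space `B_k(T; r) = span{λ^α : α ∈ S₃(T, r, k)}`. -/
def bubbleSpace (lam : Fin 4 → ((Fin 3 → ℝ) →ᵃ[ℝ] ℝ)) (k : ℕ) (rv re rf : ℤ) :
    Submodule ℝ ((Fin 3 → ℝ) → ℝ) :=
  Submodule.span ℝ (bernBary3 lam '' interiorLattice k rv re rf)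

/-- The divergence `div u = ∂₁u₁ + ∂₂u₂ + ∂₃u₃` of a vector field on `ℝ³`. -/
noncomputable def diverg (u : (Fin 3 → ℝ) → (Fin 3 → ℝ)) : (Fin 3 → ℝ) → ℝ :=
  fun x => ∑ m, fderiv ℝ (fun y => u y m) x (Pi.single m 1)

/-- Vanishing of the normal trace `u ⋅ n = 0` on `∂T` for the tetrahedron with vertices
`v₀, …, v₃`: on each face (the convex hull of the three vertices `v_i`, `i ≠ j`), `u` is
orthogonal to every vector `w` normal to that face. -/
def normalTraceZero (v : Fin 4 → (Fin 3 → ℝ)) (u : (Fin 3 → ℝ) → (Fin 3 → ℝ)) : Prop :=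
  ∀ j : Fin 4, ∀ x ∈ convexHull ℝ (v '' {i | i ≠ j}), ∀ w : Fin 3 → ℝ,
    (∀ a, a ≠ j → ∀ b, b ≠ j → ∑ m, w m * (v a m - v b m) = 0) →
    ∑ m, w m * u x m = 0

theorem mem_interiorLattice_zero_edge {k : ℕ} {rv : ℤ} {α : Fin 4 → ℕ} :
    α ∈ interiorLattice k rv 0 (-1) ↔ ∑ i, α i = k ∧ (∀ i, (α i : ℤ) + rv < k) ∧
      ∀ i j, i ≠ j → α i ≠ 0 ∨ α j ≠ 0 := by
  have hs : ∀ f : Finset (Fin 4),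
      (∑ i ∈ f, (α i : ℤ)) + ∑ i ∈ fᶜ, (α i : ℤ) = ∑ i, (α i : ℤ) := fun f =>
    Finset.sum_add_sum_compl f _
  constructor
  · rintro ⟨h, hf⟩
    have hk : ∑ i, (α i : ℤ) = k := by rw [← h]; push_cast; rfl
    refine ⟨h, fun i => ?_, fun i j hij => ?_⟩
    · have h1 := (hf {i} (by simp) (by
        intro h; simpa using congrArg Finset.card h)).1 (by simp)
      have := hs {i}
      rw [Finset.sum_singleton] at this
      omega
    · by_contra! h0
      have hc : ({i, j} : Finset (Fin 4)).card = 2 := Finset.card_pair hij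
      have hcc : (({i, j} : Finset (Fin 4))ᶜ).card = 2 := by
        rw [Finset.card_compl, hc]; rfl
      have h1 := (hf ({i, j}ᶜ) (Finset.card_pos.1 (by omega)) (by
        intro h; rw [h] at hcc; simp at hcc)).2.1 hcc
      rw [compl_compl, Finset.sum_pair hij] at h1
      omega
  · rintro ⟨h, h1, h2⟩
    have hk : ∑ i, (α i : ℤ) = k := by rw [← h]; push_cast; rfl
    refine ⟨h, fun f _ _ => ⟨fun hc => ?_, fun hc => ?_, fun _ => ?_⟩⟩
    · obtain ⟨i, rfl⟩ := Finset.card_eq_one.1 hc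
      have := hs {i}
      rw [Finset.sum_singleton] at this
      have := h1 i
      omega
    · have hcc : fᶜ.card = 2 := by rw [Finset.card_compl, hc]; rfl
      obtain ⟨i, j, hij, he⟩ := Finset.card_eq_two.1 hcc
      rw [he, Finset.sum_pair hij]
      have := h2 i j hij
      omega
    · exact lt_of_lt_of_le (by norm_num) (Finset.sum_nonneg fun i _ => Int.natCast_nonneg _)

theorem mem_interiorLattice_neg_one_edge {k : ℕ} {rv : ℤ} {β : Fin 4 → ℕ} :
    β ∈ interiorLattice k rv (-1) (-1) ↔ ∑ i, β i = k ∧ ∀ i, (β i : ℤ) + rv < k := by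
  have hs : ∀ f : Finset (Fin 4),
      (∑ i ∈ f, (β i : ℤ)) + ∑ i ∈ fᶜ, (β i : ℤ) = ∑ i, (β i : ℤ) := fun f =>
    Finset.sum_add_sum_compl f _
  constructor
  · rintro ⟨h, hf⟩
    have hk : ∑ i, (β i : ℤ) = k := by rw [← h]; push_cast; rfl
    refine ⟨h, fun i => ?_⟩
    have h1 := (hf {i} (by simp) (by
      intro h; simpa using congrArg Finset.card h)).1 (by simp)
    have := hs {i}
    rw [Finset.sum_singleton] at this
    omega
  · rintro ⟨h, h1⟩
    have hk : ∑ i, (β i : ℤ) = k := by rw [← h]; push_cast; rfl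
    refine ⟨h, fun f _ _ => ⟨fun hc => ?_, fun _ => ?_, fun _ => ?_⟩⟩
    · obtain ⟨i, rfl⟩ := Finset.card_eq_one.1 hc
      have := hs {i}
      rw [Finset.sum_singleton] at this
      have := h1 i
      omega
    all_goals
      exact lt_of_lt_of_le (by norm_num) (Finset.sum_nonneg fun i _ => Int.natCast_nonneg _)

/-- Move one unit of the multi-index `β` from position `b` to position `c`. -/
def shiftUnit (β : Fin 4 → ℕ) (b c : Fin 4) : Fin 4 → ℕ :=
  β + Pi.single c 1 - Pi.single b 1

theorem shiftUnit_source {β : Fin 4 → ℕ} {b c : Fin 4} (h : b ≠ c) :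
    shiftUnit β b c b = β b - 1 := by simp [shiftUnit, h]

theorem shiftUnit_target {β : Fin 4 → ℕ} {b c : Fin 4} (h : b ≠ c) :
    shiftUnit β b c c = β c + 1 := by simp [shiftUnit, h.symm]

theorem shiftUnit_of_ne {β : Fin 4 → ℕ} {b c i : Fin 4} (hb : i ≠ b) (hc : i ≠ c) :
    shiftUnit β b c i = β i := by simp [shiftUnit, hb, hc]

/-- Four pairwise distinct indices exhaust `Fin 4`. -/
theorem sum_eq_of_pairwise_ne {M : Type*} [AddCommMonoid M] (f : Fin 4 → M) {a b c d : Fin 4}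
    (hab : a ≠ b) (hac : a ≠ c) (had : a ≠ d) (hbc : b ≠ c) (hbd : b ≠ d) (hcd : c ≠ d) :
    ∑ i, f i = f a + (f b + (f c + f d)) := by
  have hu : ({a, b, c, d} : Finset (Fin 4)) = Finset.univ := by
    apply Finset.eq_univ_of_card
    simp [Finset.card_insert_of_notMem, *]
  rw [← hu, Finset.sum_insert (by simp [*]), Finset.sum_insert (by simp [*]),
    Finset.sum_pair hcd]

theorem exists_complementary_pair {a b : Fin 4} (hab : a ≠ b) :
    ∃ c d, a ≠ c ∧ a ≠ d ∧ b ≠ c ∧ b ≠ d ∧ c ≠ d := by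
  decide +revert

/-- The multi-indices of size `n` with entries at most `M < n` are connected under unit shifts
`b → c` for which some third entry is nonzero. -/
theorem lattice_connected {n M : ℕ} (hMn : M < n) {P : (Fin 4 → ℕ) → Prop}
    (hstep : ∀ β : Fin 4 → ℕ, ∑ i, β i = n → (∀ i, β i ≤ M) → ∀ b c d, b ≠ c → d ≠ b → d ≠ c →
      1 ≤ β b → β c + 1 ≤ M → 1 ≤ β d → P β → P (shiftUnit β b c))
    {β γ : Fin 4 → ℕ} (hβ : ∑ i, β i = n) (hβM : ∀ i, β i ≤ M)
    (hγ : ∑ i, γ i = n) (hγM : ∀ i, γ i ≤ M) (h : P β) : P γ := by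
  induction hd : ∑ i, (β i - γ i) using Nat.strong_induction_on generalizing β with
  | _ D ih =>
  by_cases heq : ∀ i, β i ≤ γ i
  · have : β = γ := by
      funext i
      exact (Finset.sum_eq_sum_iff_of_le (fun i _ => heq i)).1 (hβ.trans hγ.symm) i
        (Finset.mem_univ i)
    exact this ▸ h
  push Not at heq
  obtain ⟨i, hi⟩ := heq
  obtain ⟨j, hj⟩ : ∃ j, β j < γ j := by
    by_contra! hle
    have := Finset.sum_lt_sum (fun i _ => hle i) ⟨i, Finset.mem_univ i, hi⟩
    omega
  have hij : i ≠ j := by rintro rfl; omega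
  -- one admissible shift towards `γ`
  have hmove : ∀ j l, i ≠ j → l ≠ i → l ≠ j → β j < γ j → 1 ≤ β l → P γ := by
    intro j l hij hli hlj hj hl
    obtain ⟨c, d, hic, hid, hjc, hjd, hcd⟩ := exists_complementary_pair hij
    have e1 := shiftUnit_source (β := β) hij
    have e2 := shiftUnit_target (β := β) hij
    have e3 := shiftUnit_of_ne (β := β) hic.symm hjc.symm
    have e4 := shiftUnit_of_ne (β := β) hid.symm hjd.symm
    have hγj := hγM j
    have hβi := hβM i
    rw [sum_eq_of_pairwise_ne _ hij hic hid hjc hjd hcd] at hd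
    refine ih _ ?_ (β := shiftUnit β i j) ?_ ?_
      (hstep β hβ hβM i j l hij hli hlj (by omega) (by omega) hl h) rfl
    · rw [sum_eq_of_pairwise_ne _ hij hic hid hjc hjd hcd]
      omega
    · rw [sum_eq_of_pairwise_ne _ hij hic hid hjc hjd hcd] at hβ ⊢
      omega
    · intro m
      have := hβM m
      by_cases hmi : m = i
      · subst hmi; omega
      by_cases hmj : m = j
      · subst hmj; omega
      rw [shiftUnit_of_ne hmi hmj]; omega
  obtain ⟨c, d, hic, hid, hjc, hjd, hcd⟩ := exists_complementary_pair hij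
  by_cases hc : 1 ≤ β c
  · exact hmove j c hij hic.symm hjc.symm hj hc
  by_cases hdd : 1 ≤ β d
  · exact hmove j d hij hid.symm hjd.symm hj hdd
  have hβi := hβM i
  have hγi := hγM i
  have hγj := hγM j
  have sβ := hβ
  have sγ := hγ
  rw [sum_eq_of_pairwise_ne _ hij hic hid hjc hjd hcd] at sβ sγ hd
  by_cases hgc : 1 ≤ γ c
  · exact hmove c j hic hij.symm hjc (by omega) (by omega)
  by_cases hgd : 1 ≤ γ d
  · exact hmove d j hid hij.symm hjd (by omega) (by omega)
  -- both multi-indices lie on the edge `ij`: detour through `c`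
  have e1 := shiftUnit_source (β := β) hic
  have e2 := shiftUnit_target (β := β) hic
  have e3 := shiftUnit_of_ne (β := β) hij.symm hjc
  have e4 := shiftUnit_of_ne (β := β) hid.symm hcd.symm
  have h1 := hstep β hβ hβM i c j hic hij.symm hjc (by omega) (by omega) (by omega) h
  have hs1 : ∑ m, shiftUnit β i c m = n := by
    rw [sum_eq_of_pairwise_ne _ hij hic hid hjc hjd hcd]; omega
  have hb1 : ∀ m, shiftUnit β i c m ≤ M := by
    intro m
    have := hβM m
    by_cases hmi : m = i
    · subst hmi; omega
    by_cases hmc : m = c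
    · subst hmc; omega
    rw [shiftUnit_of_ne hmi hmc]; omega
  have f1 := shiftUnit_source (β := shiftUnit β i c) hjc.symm
  have f2 := shiftUnit_target (β := shiftUnit β i c) hjc.symm
  have f3 := shiftUnit_of_ne (β := shiftUnit β i c) hic hij
  have f4 := shiftUnit_of_ne (β := shiftUnit β i c) hcd.symm hjd.symm
  refine ih _ ?_ (β := shiftUnit (shiftUnit β i c) c j) ?_ ?_
    (hstep _ hs1 hb1 c j i hjc.symm hic hij (by omega) (by omega) (by omega) h1) rfl
  · rw [sum_eq_of_pairwise_ne _ hij hic hid hjc hjd hcd]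
    omega
  · rw [sum_eq_of_pairwise_ne _ hij hic hid hjc hjd hcd]
    omega
  · intro m
    have := hb1 m
    by_cases hmj : m = j
    · subst hmj; omega
    by_cases hmc : m = c
    · subst hmc; omega
    rw [shiftUnit_of_ne hmc hmj]; omega

section Barycentric

variable {v : Fin 4 → (Fin 3 → ℝ)} {lam : Fin 4 → ((Fin 3 → ℝ) →ᵃ[ℝ] ℝ)}

theorem sum_bary_smul_vertex (hv : AffineIndependent ℝ v)
    (hlam : ∀ i j, lam i (v j) = if i = j then 1 else 0) (x : Fin 3 → ℝ) :
    ∑ i, lam i x • v i = x := by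
  have htop : affineSpan ℝ (Set.range v) = ⊤ := by
    rw [hv.affineSpan_eq_top_iff_card_eq_finrank_add_one]; simp
  let b : AffineBasis (Fin 4) ℝ (Fin 3 → ℝ) := ⟨v, hv, htop⟩
  have hcoord : ∀ i, lam i x = b.coord i x := by
    intro i
    have h1 : ∑ j, b.coord j x = 1 := b.sum_coord_apply_eq_one x
    have h2 := b.affineCombination_coord_eq_self x
    conv_lhs => rw [← h2]
    rw [Finset.map_affineCombination _ _ _ h1,
      Finset.affineCombination_eq_linear_combination _ _ _ h1]
    have : ∀ j, lam i (b j) = if i = j then 1 else 0 := hlam i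
    simp [this]
  simp_rw [hcoord]
  exact b.linear_combination_coord_eq_self x

theorem sum_linear_bary_smul_vertex (hrep : ∀ x, ∑ i, lam i x • v i = x) (w : Fin 3 → ℝ) :
    ∑ i, (lam i).linear w • v i = w := by
  have h : ∀ i, (lam i).linear w = lam i w - lam i 0 := fun i => by
    simpa using (lam i).linearMap_vsub w 0
  simp_rw [h, sub_smul, Finset.sum_sub_distrib, hrep, sub_zero]

theorem sum_linear_bary (hsum : ∀ x : Fin 3 → ℝ, ∑ i, lam i x = 1) (w : Fin 3 → ℝ) :
    ∑ i, (lam i).linear w = 0 := by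
  have h : ∀ i, (lam i).linear w = lam i w - lam i 0 := fun i => by
    simpa using (lam i).linearMap_vsub w 0
  simp_rw [h, Finset.sum_sub_distrib, hsum, sub_self]

theorem mem_tetrahedron_iff (hlam : ∀ i j, lam i (v j) = if i = j then 1 else 0)
    (hsum : ∀ x : Fin 3 → ℝ, ∑ i, lam i x = 1) (hrep : ∀ x, ∑ i, lam i x • v i = x)
    {x : Fin 3 → ℝ} : x ∈ convexHull ℝ (Set.range v) ↔ ∀ i, 0 ≤ lam i x := by
  constructor
  · intro hx i
    have hc : Convex ℝ (lam i ⁻¹' Set.Ici 0) := (convex_Ici 0).affine_preimage _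
    refine convexHull_min ?_ hc hx
    rintro _ ⟨j, rfl⟩
    simp only [Set.mem_preimage, Set.mem_Ici, hlam]
    split_ifs <;> norm_num
  · intro h
    exact mem_convexHull_of_exists_fintype (fun i => lam i x) v h (hsum x)
      (fun i => Set.mem_range_self i) (hrep x)

theorem bary_eq_zero_of_mem_face (hlam : ∀ i j, lam i (v j) = if i = j then 1 else 0)
    {j : Fin 4} {x : Fin 3 → ℝ} (hx : x ∈ convexHull ℝ (v '' {i | i ≠ j})) : lam j x = 0 := by
  have hc : Convex ℝ (lam j ⁻¹' {0}) := (convex_singleton 0).affine_preimage _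
  refine convexHull_min ?_ hc hx
  rintro _ ⟨i, hi, rfl⟩
  simp only [Set.mem_preimage, Set.mem_singleton_iff, hlam]
  exact if_neg (Ne.symm hi)

theorem mem_face_of_bary_eq_zero
    (hsum : ∀ x : Fin 3 → ℝ, ∑ i, lam i x = 1) (hrep : ∀ x, ∑ i, lam i x • v i = x)
    {j : Fin 4} {x : Fin 3 → ℝ} (hx : ∀ i, 0 ≤ lam i x) (hj : lam j x = 0) :
    x ∈ convexHull ℝ (v '' {i | i ≠ j}) := by
  have h1 := hsum x
  have h2 := hrep x
  rw [← Finset.add_sum_erase _ _ (Finset.mem_univ j)] at h1 h2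
  rw [hj, zero_add] at h1
  rw [hj, zero_smul, zero_add] at h2
  rw [← h2, ← Finset.centerMass_eq_of_sum_1 _ _ h1]
  refine Finset.centerMass_mem_convexHull _ (fun i _ => hx i) (by rw [h1]; norm_num) ?_
  intro i hi
  exact ⟨i, Finset.ne_of_mem_erase hi, rfl⟩

theorem isClosed_referenceSimplex :
    IsClosed {s : Fin 3 → ℝ | (∀ i, 0 ≤ s i) ∧ ∑ i, s i ≤ 1} := by
  have : {s : Fin 3 → ℝ | (∀ i, 0 ≤ s i) ∧ ∑ i, s i ≤ 1} =
      (⋂ i, {s | 0 ≤ s i}) ∩ {s | ∑ i, s i ≤ 1} := by ext; simp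
  rw [this]
  exact (isClosed_iInter fun i => isClosed_le continuous_const (continuous_apply i)).inter
    (isClosed_le (by fun_prop) continuous_const)

/-- A `C¹` function vanishing at both ends of every line segment of the reference simplex
parallel to the first axis has a first partial derivative of mean zero. -/
theorem integral_partial_referenceSimplex {G : (Fin 3 → ℝ) → ℝ} (hG : ContDiff ℝ 1 G)
    (h0 : ∀ s : Fin 3 → ℝ, (∀ i, 0 ≤ s i) → ∑ i, s i ≤ 1 → s 0 = 0 → G s = 0)
    (h1 : ∀ s : Fin 3 → ℝ, (∀ i, 0 ≤ s i) → ∑ i, s i = 1 → G s = 0) :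
    ∫ s in {s : Fin 3 → ℝ | (∀ i, 0 ≤ s i) ∧ ∑ i, s i ≤ 1}, fderiv ℝ G s (Pi.single 0 1) = 0 := by
  set G' := fun s => fderiv ℝ G s (Pi.single 0 1)
  have hG' : Continuous G' := (hG.continuous_fderiv one_ne_zero).clm_apply continuous_const
  set D : Set (Fin 3 → ℝ) := {s | (∀ i, 0 ≤ s i) ∧ ∑ i, s i ≤ 1} with hD
  have hclosed : IsClosed D := isClosed_referenceSimplex
  have hsub : D ⊆ Set.Icc 0 1 := by
    rintro s ⟨hs, hs1⟩
    refine ⟨hs, fun i => (Finset.single_le_sum (fun j _ => hs j) (Finset.mem_univ i)).trans hs1⟩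
  have hcpt : IsCompact D := isCompact_Icc.of_isClosed_subset hclosed hsub
  have hint : Integrable (D.indicator G') :=
    (integrable_indicator_iff hclosed.measurableSet).2 (hG'.continuousOn.integrableOn_compact hcpt)
  rw [← integral_indicator hclosed.measurableSet]
  let e := MeasurableEquiv.piFinSuccAbove (fun _ : Fin 3 => ℝ) 0
  have he : MeasurePreserving e.symm := (volume_preserving_piFinSuccAbove _ 0).symm
  rw [← he.integral_comp' (D.indicator G')]
  rw [Measure.volume_eq_prod, integral_prod_symm]
  swap
  · exact (he.integrable_comp_emb e.symm.measurableEmbedding).2 hint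
  refine integral_eq_zero_of_ae (Filter.Eventually.of_forall fun y => ?_)
  have hey : ∀ t : ℝ, e.symm (t, y) = Fin.cons t y := fun t => by
    simp [e, MeasurableEquiv.piFinSuccAbove]
    rfl
  simp only [hey, Pi.zero_apply]
  by_cases hy : (∀ i, 0 ≤ y i) ∧ ∑ i, y i ≤ 1
  · set c := 1 - ∑ i, y i with hc
    have hc0 : 0 ≤ c := by linarith [hy.2]
    have hmem : ∀ t : ℝ, (Fin.cons t y : Fin 3 → ℝ) ∈ D ↔ t ∈ Set.Icc 0 c := by
      intro t
      simp only [hD, Set.mem_ofPred_eq, Fin.forall_fin_succ (n := 2), Fin.cons_zero, Fin.cons_succ,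
        Fin.sum_univ_succ (n := 2), Set.mem_Icc]
      constructor
      · rintro ⟨⟨h, _⟩, h'⟩; exact ⟨h, by linarith⟩
      · rintro ⟨h, h'⟩; exact ⟨⟨h, hy.1⟩, by linarith⟩
    have hind : (fun t : ℝ => D.indicator G' (Fin.cons t y)) =
        (Set.Icc 0 c).indicator fun t => G' (Fin.cons t y) := by
      funext t
      by_cases h : t ∈ Set.Icc 0 c
      · rw [Set.indicator_of_mem h, Set.indicator_of_mem ((hmem t).2 h)]
      · rw [Set.indicator_of_notMem h, Set.indicator_of_notMem (mt (hmem t).1 h)]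
    have hcons : Continuous fun t : ℝ => (Fin.cons t y : Fin 3 → ℝ) := by fun_prop
    have hderiv : ∀ t : ℝ, HasDerivAt (fun t : ℝ => G (Fin.cons t y)) (G' (Fin.cons t y)) t := by
      intro t
      have hline : HasDerivAt (fun t : ℝ => (Fin.cons t y : Fin 3 → ℝ)) (Pi.single 0 1) t := by
        rw [hasDerivAt_pi]
        intro i
        refine Fin.cases ?_ (fun i => ?_) i
        · simpa using hasDerivAt_id' t
        · simpa using hasDerivAt_const t (y i)
      exact (hG.differentiable one_ne_zero _).hasFDerivAt.comp_hasDerivAt t hline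
    rw [hind, integral_indicator measurableSet_Icc, integral_Icc_eq_integral_Ioc,
      ← intervalIntegral.integral_of_le hc0,
      intervalIntegral.integral_eq_sub_of_hasDerivAt (fun t _ => hderiv t)
        ((hG'.comp hcons).intervalIntegrable _ _)]
    rw [h1, h0, sub_zero]
    · exact ((hmem 0).2 ⟨le_rfl, hc0⟩).1
    · exact ((hmem 0).2 ⟨le_rfl, hc0⟩).2
    · rfl
    · exact ((hmem c).2 ⟨hc0, le_rfl⟩).1
    · simp [Fin.sum_univ_succ (n := 2), hc]
  · have : ∀ t : ℝ, (Fin.cons t y : Fin 3 → ℝ) ∉ D := by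
      rintro t ⟨ht, ht1⟩
      simp only [Fin.forall_fin_succ (n := 2), Fin.cons_zero, Fin.cons_succ,
        Fin.sum_univ_succ (n := 2)] at ht ht1
      exact hy ⟨ht.2, by linarith [ht.1]⟩
    simp [Set.indicator_of_notMem (this _)]

/-- The derivative along the edge `v a → v b` of a `C¹` function vanishing on the faces opposite
to `v a` and `v b` has mean zero over the tetrahedron. -/
theorem setIntegral_fderiv_edge_eq_zero (hlam : ∀ i j, lam i (v j) = if i = j then 1 else 0)
    (hsum : ∀ x : Fin 3 → ℝ, ∑ i, lam i x = 1) (hrep : ∀ x, ∑ i, lam i x • v i = x)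
    {g : (Fin 3 → ℝ) → ℝ} (hg : ContDiff ℝ 1 g) {a b : Fin 4} (hab : a ≠ b)
    (ha : ∀ x, (∀ i, 0 ≤ lam i x) → lam a x = 0 → g x = 0)
    (hb : ∀ x, (∀ i, 0 ≤ lam i x) → lam b x = 0 → g x = 0) :
    ∫ x in convexHull ℝ (Set.range v), fderiv ℝ g x (v b - v a) = 0 := by
  obtain ⟨σ, hσ0, hσ1⟩ : ∃ σ : Equiv.Perm (Fin 4), σ 0 = a ∧ σ 1 = b := by
    revert hab; clear! v lam g; revert a b; decide
  set D : Set (Fin 3 → ℝ) := {s | (∀ i, 0 ≤ s i) ∧ ∑ i, s i ≤ 1} with hD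
  let A : (Fin 3 → ℝ) →L[ℝ] (Fin 3 → ℝ) :=
    ∑ i, (ContinuousLinearMap.proj i : (Fin 3 → ℝ) →L[ℝ] ℝ).smulRight (v (σ i.succ) - v a)
  let Φ : (Fin 3 → ℝ) → (Fin 3 → ℝ) := fun s => v a + A s
  have hA : ∀ s, A s = ∑ i, s i • (v (σ i.succ) - v a) := fun s => by simp [A]
  have hΦd : ∀ s, HasFDerivAt Φ A s := fun s => A.hasFDerivAt.const_add (v a)
  have hΦsucc : ∀ s (i : Fin 3), lam (σ i.succ) (Φ s) = s i := by
    intro s i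
    have hlin : ∀ j, (lam (σ i.succ)).linear (v j - v a) =
        lam (σ i.succ) (v j) - lam (σ i.succ) (v a) := fun j =>
      (lam (σ i.succ)).linearMap_vsub (v j) (v a)
    have hne : σ i.succ ≠ a := by
      rw [← hσ0]; exact σ.injective.ne (Fin.succ_ne_zero i)
    have h := (lam (σ i.succ)).map_vadd (v a) (A s)
    simp only [vadd_eq_add] at h
    simp only [Φ]
    rw [add_comm, h, hA, map_sum]
    simp [hlin, hlam, hne]
  have hΦzero : ∀ s, lam a (Φ s) = 1 - ∑ i, s i := by
    intro s
    have := hsum (Φ s)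
    rw [← Equiv.sum_comp σ, Fin.sum_univ_succ, hσ0] at this
    simp only [hΦsucc] at this
    linarith
  have hpos : ∀ s, (∀ i, 0 ≤ lam i (Φ s)) ↔ s ∈ D := by
    intro s
    rw [← σ.forall_congr_right, Fin.forall_fin_succ, hσ0]
    simp only [hΦsucc, hΦzero, hD, Set.mem_ofPred_eq, sub_nonneg]
    exact and_comm
  have hinj : Function.Injective Φ := fun s t hst => by
    funext i
    rw [← hΦsucc s i, hst, hΦsucc]
  have himg : convexHull ℝ (Set.range v) = Φ '' D := by
    ext x
    rw [mem_tetrahedron_iff hlam hsum hrep]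
    constructor
    · intro hx
      have hx' : Φ (fun i => lam (σ i.succ) x) = x := by
        have h1 := hsum x
        have h2 := hrep x
        rw [← Equiv.sum_comp σ, Fin.sum_univ_succ, hσ0] at h1 h2
        simp only [Φ, hA, smul_sub, Finset.sum_sub_distrib, ← Finset.sum_smul]
        rw [← eq_sub_iff_add_eq'] at h1 h2
        rw [h1, h2]
        module
      exact ⟨_, (hpos _).1 (by rwa [hx']), hx'⟩
    · rintro ⟨s, hs, rfl⟩
      exact (hpos s).2 hs
  have hDm : MeasurableSet D := isClosed_referenceSimplex.measurableSet
  have hΦc : ContDiff ℝ 1 Φ := contDiff_const.add A.contDiff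
  have hA1 : A (Pi.single 0 1) = v b - v a := by simp [hA, hσ1]
  have hfd : ∀ s, fderiv ℝ (g ∘ Φ) s (Pi.single 0 1) = fderiv ℝ g (Φ s) (v b - v a) := by
    intro s
    rw [((hg.differentiable one_ne_zero (Φ s)).hasFDerivAt.comp s (hΦd s)).fderiv,
      ContinuousLinearMap.comp_apply, hA1]
  rw [himg, integral_image_eq_integral_abs_det_fderiv_smul volume hDm
    (fun s _ => (hΦd s).hasFDerivWithinAt) hinj.injOn, integral_smul,
    setIntegral_congr_fun hDm (fun s _ => (hfd s).symm),
    integral_partial_referenceSimplex (hg.comp hΦc), smul_zero]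
  · intro s hs hs1 hs0
    refine hb _ ((hpos s).2 ⟨hs, hs1⟩) ?_
    rw [← hσ1]
    exact (hΦsucc s 0).trans hs0
  · intro s hs hs1
    refine ha _ ((hpos s).2 ⟨hs, hs1.le⟩) ?_
    rw [hΦzero, hs1, sub_self]

end Barycentric

section Bubble

variable {v : Fin 4 → (Fin 3 → ℝ)} {lam : Fin 4 → ((Fin 3 → ℝ) →ᵃ[ℝ] ℝ)}

theorem hasFDerivAt_bary (l : (Fin 3 → ℝ) →ᵃ[ℝ] ℝ) (x : Fin 3 → ℝ) :
    HasFDerivAt l (LinearMap.toContinuousLinearMap l.linear) x := by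
  have h : (l : (Fin 3 → ℝ) → ℝ) =
      fun y => LinearMap.toContinuousLinearMap l.linear y + l 0 := by
    funext y
    exact congrFun l.decomp y
  conv => arg 1; rw [h]
  exact (LinearMap.toContinuousLinearMap l.linear).hasFDerivAt.add_const _

theorem contDiff_bary (l : (Fin 3 → ℝ) →ᵃ[ℝ] ℝ) : ContDiff ℝ 1 l := by
  have h : (l : (Fin 3 → ℝ) → ℝ) =
      fun y => LinearMap.toContinuousLinearMap l.linear y + l 0 := by
    funext y
    exact congrFun l.decomp y
  rw [h]
  exact (LinearMap.toContinuousLinearMap l.linear).contDiff.add contDiff_const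

theorem contDiff_bernBary3 (α : Fin 4 → ℕ) : ContDiff ℝ 1 (bernBary3 lam α) :=
  contDiff_prod fun i _ => (contDiff_bary (lam i)).pow (α i)

theorem fderiv_bernBary3 (α : Fin 4 → ℕ) (x w : Fin 3 → ℝ) :
    fderiv ℝ (bernBary3 lam α) x w =
      ∑ i, (α i : ℝ) * (lam i).linear w * bernBary3 lam (α - Pi.single i 1) x := by
  have h := HasFDerivAt.finsetProd (u := Finset.univ)
    fun i (_ : i ∈ Finset.univ) => (hasFDerivAt_bary (lam i) x).pow (α i)
  have h' : fderiv ℝ (bernBary3 lam α) x = _ := h.fderiv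
  rw [h', sum_apply]
  refine Finset.sum_congr rfl fun i _ => ?_
  have herase : ∏ j ∈ Finset.univ.erase i, lam j x ^ (α - Pi.single i 1 : Fin 4 → ℕ) j =
      ∏ j ∈ Finset.univ.erase i, lam j x ^ α j :=
    Finset.prod_congr rfl fun j hj => by
      rw [Pi.sub_apply, Pi.single_eq_of_ne (Finset.ne_of_mem_erase hj), Nat.sub_zero]
  rw [bernBary3, ← Finset.mul_prod_erase _ _ (Finset.mem_univ i), herase, Pi.sub_apply,
    Pi.single_eq_same]
  simp
  ring

theorem bernBary3_eq_zero {α : Fin 4 → ℕ} {j : Fin 4} {x : Fin 3 → ℝ} (hα : α j ≠ 0)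
    (hx : lam j x = 0) : bernBary3 lam α x = 0 :=
  Finset.prod_eq_zero (Finset.mem_univ j) (by rw [hx, zero_pow hα])

theorem contDiff_of_mem_span {s : Set (Fin 4 → ℕ)} {f : (Fin 3 → ℝ) → ℝ}
    (hf : f ∈ Submodule.span ℝ (bernBary3 lam '' s)) : ContDiff ℝ 1 f := by
  induction hf using Submodule.span_induction with
  | mem f hf =>
    obtain ⟨α, -, rfl⟩ := hf
    exact contDiff_bernBary3 α
  | zero => exact contDiff_const
  | add f g _ _ hf hg => exact hf.add hg
  | smul c f _ hf => exact hf.const_smul c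

theorem eq_zero_of_mem_span {s : Set (Fin 4 → ℕ)} {f : (Fin 3 → ℝ) → ℝ}
    (hf : f ∈ Submodule.span ℝ (bernBary3 lam '' s)) {j : Fin 4} (hs : ∀ α ∈ s, α j ≠ 0)
    {x : Fin 3 → ℝ} (hx : lam j x = 0) : f x = 0 := by
  induction hf using Submodule.span_induction with
  | mem f hf =>
    obtain ⟨α, hα, rfl⟩ := hf
    exact bernBary3_eq_zero (hs α hα) hx
  | zero => rfl
  | add f g _ _ hf hg => simp [hf, hg]
  | smul c f _ hf => simp [hf]

theorem sum_mul_fderiv_single (g : (Fin 3 → ℝ) → ℝ) (x w : Fin 3 → ℝ) :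
    ∑ m, w m * fderiv ℝ g x (Pi.single m 1) = fderiv ℝ g x w := by
  conv_rhs => rw [pi_eq_sum_univ' w, map_sum]
  refine Finset.sum_congr rfl fun m _ => ?_
  rw [map_smul, smul_eq_mul]

theorem linear_edge (hlam : ∀ i j, lam i (v j) = if i = j then 1 else 0) (i a b : Fin 4) :
    (lam i).linear (v b - v a) = (if i = b then 1 else 0) - if i = a then 1 else 0 := by
  rw [← hlam i b, ← hlam i a]
  exact (lam i).linearMap_vsub (v b) (v a)

theorem fderiv_bernBary3_edge (hlam : ∀ i j, lam i (v j) = if i = j then 1 else 0)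
    (α : Fin 4 → ℕ) (a b : Fin 4) (x : Fin 3 → ℝ) :
    fderiv ℝ (bernBary3 lam α) x (v b - v a) =
      α b * bernBary3 lam (α - Pi.single b 1) x - α a * bernBary3 lam (α - Pi.single a 1) x := by
  rw [fderiv_bernBary3]
  simp only [linear_edge hlam, mul_sub, sub_mul, Finset.sum_sub_distrib]
  simp

theorem fderiv_mem_bubbleSpace {k : ℕ} {rv : ℤ} {f : (Fin 3 → ℝ) → ℝ}
    (hf : f ∈ bubbleSpace lam k rv 0 (-1)) (w : Fin 3 → ℝ) :
    (fun x => fderiv ℝ f x w) ∈ bubbleSpace lam (k - 1) (rv - 1) (-1) (-1) := by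
  unfold bubbleSpace at hf
  induction hf using Submodule.span_induction with
  | mem f hf =>
    obtain ⟨α, hα, rfl⟩ := hf
    have he : (fun x => fderiv ℝ (bernBary3 lam α) x w) =
        ∑ i, ((α i : ℝ) * (lam i).linear w) • bernBary3 lam (α - Pi.single i 1) := by
      funext x
      simp [fderiv_bernBary3]
    rw [he]
    refine Submodule.sum_mem _ fun i _ => ?_
    by_cases hi : α i = 0
    · simp [hi]
    refine Submodule.smul_mem _ _ (Submodule.subset_span ⟨_, ?_, rfl⟩)
    rw [mem_interiorLattice_zero_edge] at hα
    rw [mem_interiorLattice_neg_one_edge]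
    obtain ⟨hs, hb, -⟩ := hα
    have hs' : ∑ j, (α - Pi.single i 1 : Fin 4 → ℕ) j = k - 1 := by
      rw [← Finset.add_sum_erase _ _ (Finset.mem_univ i)] at hs ⊢
      rw [Finset.sum_congr (g := fun j => α j) rfl fun j hj => by
        rw [Pi.sub_apply, Pi.single_eq_of_ne (Finset.ne_of_mem_erase hj), Nat.sub_zero],
        Pi.sub_apply, Pi.single_eq_same]
      omega
    refine ⟨hs', fun j => ?_⟩
    have h1 := hb j
    have h2 := hb i
    have h3 : (α - Pi.single i 1 : Fin 4 → ℕ) j ≤ α j := by simp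
    omega
  | zero =>
    convert Submodule.zero_mem _
    simp
  | add f g hf hg hf' hg' =>
    have he : (fun x => fderiv ℝ (f + g) x w) =
        (fun x => fderiv ℝ f x w) + fun x => fderiv ℝ g x w := by
      funext x
      rw [fderiv_add ((contDiff_of_mem_span hf).differentiable one_ne_zero x)
        ((contDiff_of_mem_span hg).differentiable one_ne_zero x)]
      rfl
    rw [he]
    exact Submodule.add_mem _ hf' hg'
  | smul c f hf hf' =>
    have he : (fun x => fderiv ℝ (c • f) x w) = c • fun x => fderiv ℝ f x w := by
      funext x
      rw [fderiv_const_smul ((contDiff_of_mem_span hf).differentiable one_ne_zero x)]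
      rfl
    rw [he]
    exact Submodule.smul_mem _ _ hf'

theorem diverg_mem_bubbleSpace {k : ℕ} {rv : ℤ} {u : (Fin 3 → ℝ) → (Fin 3 → ℝ)}
    (hu : ∀ m, (fun x => u x m) ∈ bubbleSpace lam k rv 0 (-1)) :
    diverg u ∈ bubbleSpace lam (k - 1) (rv - 1) (-1) (-1) := by
  have he : diverg u = ∑ m, fun x => fderiv ℝ (fun y => u y m) x (Pi.single m 1) := by
    funext x
    simp [diverg]
  rw [he]
  exact Submodule.sum_mem _ fun m _ => fderiv_mem_bubbleSpace (hu m) _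

/-- The divergences of the fields in `𝔹ᵈⁱᵛ_k(T; (rᵛ, 0, −1))`. -/
def divRange (v : Fin 4 → (Fin 3 → ℝ)) (lam : Fin 4 → ((Fin 3 → ℝ) →ᵃ[ℝ] ℝ)) (k : ℕ) (rv : ℤ) :
    Submodule ℝ ((Fin 3 → ℝ) → ℝ) where
  carrier := {p | ∃ u : (Fin 3 → ℝ) → (Fin 3 → ℝ),
    (∀ m : Fin 3, (fun x => u x m) ∈ bubbleSpace lam k rv 0 (-1)) ∧
    normalTraceZero v u ∧ p = diverg u}
  zero_mem' := by
    refine ⟨0, fun m => Submodule.zero_mem _, fun j x _ w _ => by simp, ?_⟩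
    funext x
    simp [diverg]
  add_mem' := by
    rintro _ _ ⟨u, hu, hut, rfl⟩ ⟨u', hu', hut', rfl⟩
    refine ⟨u + u', fun m => Submodule.add_mem _ (hu m) (hu' m), fun j x hx w hw => ?_, ?_⟩
    · simp only [Pi.add_apply, mul_add, Finset.sum_add_distrib]
      rw [hut j x hx w hw, hut' j x hx w hw, add_zero]
    · funext x
      simp only [diverg, Pi.add_apply, ← Finset.sum_add_distrib]
      refine Finset.sum_congr rfl fun m _ => ?_
      rw [fderiv_fun_add ((contDiff_of_mem_span (hu m)).differentiable one_ne_zero x)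
        ((contDiff_of_mem_span (hu' m)).differentiable one_ne_zero x)]
      rfl
  smul_mem' := by
    rintro c _ ⟨u, hu, hut, rfl⟩
    refine ⟨c • u, fun m => Submodule.smul_mem _ c (hu m), fun j x hx w hw => ?_, ?_⟩
    · simp only [Pi.smul_apply, smul_eq_mul, mul_left_comm _ c, ← Finset.mul_sum]
      rw [hut j x hx w hw, mul_zero]
    · funext x
      simp only [diverg, Pi.smul_apply, Finset.smul_sum]
      refine Finset.sum_congr rfl fun m _ => ?_
      rw [fderiv_fun_const_smul ((contDiff_of_mem_span (hu m)).differentiable one_ne_zero x)]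
      rfl

theorem edge_difference_mem_divRange (hlam : ∀ i j, lam i (v j) = if i = j then 1 else 0)
    {k : ℕ} {rv : ℤ} {α : Fin 4 → ℕ} (hα : α ∈ interiorLattice k rv 0 (-1)) {a b : Fin 4}
    (ha : α a ≠ 0) (hb : α b ≠ 0) :
    (α b : ℝ) • bernBary3 lam (α - Pi.single b 1) - (α a : ℝ) • bernBary3 lam (α - Pi.single a 1)
      ∈ divRange v lam k rv := by
  refine ⟨fun x m => (v b - v a) m * bernBary3 lam α x, fun m => ?_, fun j x hx w hw => ?_, ?_⟩
  · exact Submodule.smul_mem _ ((v b - v a) m) (Submodule.subset_span ⟨α, hα, rfl⟩)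
  · by_cases hj : α j = 0
    · simp only [← mul_assoc, ← Finset.sum_mul, Pi.sub_apply]
      rw [hw b (by rintro rfl; exact hb hj) a (by rintro rfl; exact ha hj), zero_mul]
    · simp [bernBary3_eq_zero hj (bary_eq_zero_of_mem_face hlam hx)]
  · funext x
    have hd := (contDiff_bernBary3 (lam := lam) α).differentiable one_ne_zero x
    simp only [diverg]
    rw [Finset.sum_congr rfl fun m _ => by
      rw [fderiv_const_mul hd, smul_apply, smul_eq_mul],
      sum_mul_fderiv_single, fderiv_bernBary3_edge hlam]
    rfl

theorem integrableOn_tetrahedron {f : (Fin 3 → ℝ) → ℝ} (hf : Continuous f) :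
    IntegrableOn f (convexHull ℝ (Set.range v)) :=
  hf.continuousOn.integrableOn_compact ((Set.finite_range v).isCompact_convexHull ℝ)

theorem setIntegral_bernBary3_pos (hlam : ∀ i j, lam i (v j) = if i = j then 1 else 0)
    (hsum : ∀ x : Fin 3 → ℝ, ∑ i, lam i x = 1) (hrep : ∀ x, ∑ i, lam i x • v i = x)
    (β : Fin 4 → ℕ) : 0 < ∫ x in convexHull ℝ (Set.range v), bernBary3 lam β x := by
  have hmeas : MeasurableSet (convexHull ℝ (Set.range v)) :=
    ((Set.finite_range v).isCompact_convexHull ℝ).isClosed.measurableSet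
  rw [setIntegral_pos_iff_support_of_nonneg_ae]
  · let U : Set (Fin 3 → ℝ) := ⋂ i, {x | 0 < lam i x}
    have hU : IsOpen U := isOpen_iInter_of_finite fun i =>
      isOpen_lt continuous_const (contDiff_bary (lam i)).continuous
    have hne : U.Nonempty := by
      refine ⟨Finset.univ.affineCombination ℝ v fun _ => (1 / 4 : ℝ), Set.mem_iInter.2 fun i => ?_⟩
      have h1 : ∑ _j : Fin 4, (1 / 4 : ℝ) = 1 := by norm_num
      rw [Set.mem_ofPred_eq, Finset.map_affineCombination _ _ _ h1,
        Finset.affineCombination_eq_linear_combination _ _ _ h1]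
      simp [hlam]
    refine (hU.measure_pos volume hne).trans_le (measure_mono fun x hx => ?_)
    have hx' : ∀ i, 0 < lam i x := by simpa [U] using hx
    refine ⟨(Finset.prod_pos fun i _ => pow_pos (hx' i) _).ne', ?_⟩
    exact (mem_tetrahedron_iff hlam hsum hrep).2 fun i => (hx' i).le
  · refine (ae_restrict_iff' hmeas).2 (Filter.Eventually.of_forall fun x hx => ?_)
    exact Finset.prod_nonneg fun i _ =>
      pow_nonneg ((mem_tetrahedron_iff hlam hsum hrep).1 hx i) _
  · exact integrableOn_tetrahedron (contDiff_bernBary3 β).continuous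

/-- A member of the bubble space splits into parts vanishing on all faces but one. -/
theorem exists_face_decomposition {k : ℕ} {rv : ℤ} {f : (Fin 3 → ℝ) → ℝ}
    (hf : f ∈ bubbleSpace lam k rv 0 (-1)) :
    ∃ F : Fin 4 → ((Fin 3 → ℝ) → ℝ), (∀ j, F j ∈ Submodule.span ℝ
      (bernBary3 lam '' {α | ∀ i, i ≠ j → α i ≠ 0})) ∧ f = ∑ j, F j := by
  unfold bubbleSpace at hf
  induction hf using Submodule.span_induction with
  | mem f hf =>
    obtain ⟨α, hα, rfl⟩ := hf
    obtain ⟨-, -, h2⟩ := mem_interiorLattice_zero_edge.1 hα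
    obtain ⟨j, hj⟩ : ∃ j, ∀ i, i ≠ j → α i ≠ 0 := by
      by_cases h0 : ∃ j, α j = 0
      · obtain ⟨j, hj⟩ := h0
        exact ⟨j, fun i hi => (h2 i j hi).resolve_right (not_not.2 hj)⟩
      · push Not at h0
        exact ⟨0, fun i _ => h0 i⟩
    refine ⟨Pi.single j (bernBary3 lam α), fun i => ?_, by simp⟩
    by_cases hij : i = j
    · subst hij
      rw [Pi.single_eq_same]
      exact Submodule.subset_span ⟨α, hj, rfl⟩
    · rw [Pi.single_eq_of_ne hij]
      exact Submodule.zero_mem _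
  | zero => exact ⟨0, fun _ => Submodule.zero_mem _, by simp⟩
  | add f g _ _ hf hg =>
    obtain ⟨F, hF, rfl⟩ := hf
    obtain ⟨G, hG, rfl⟩ := hg
    exact ⟨F + G, fun j => Submodule.add_mem _ (hF j) (hG j), by simp [Finset.sum_add_distrib]⟩
  | smul c f _ hf =>
    obtain ⟨F, hF, rfl⟩ := hf
    exact ⟨c • F, fun j => Submodule.smul_mem _ c (hF j), by simp [Finset.smul_sum]⟩

theorem linear_eq_sum_single (l : (Fin 3 → ℝ) →ₗ[ℝ] ℝ) (w : Fin 3 → ℝ) :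
    l w = ∑ m, l (Pi.single m 1) * w m := by
  conv_lhs => rw [pi_eq_sum_univ' w, map_sum]
  refine Finset.sum_congr rfl fun m _ => ?_
  rw [map_smul, smul_eq_mul, mul_comm]

/-- Divergence theorem for bubble fields with vanishing normal trace. -/
theorem setIntegral_diverg_eq_zero (hlam : ∀ i j, lam i (v j) = if i = j then 1 else 0)
    (hsum : ∀ x : Fin 3 → ℝ, ∑ i, lam i x = 1) (hrep : ∀ x, ∑ i, lam i x • v i = x)
    {k : ℕ} {rv : ℤ} {u : (Fin 3 → ℝ) → (Fin 3 → ℝ)}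
    (hu : ∀ m, (fun x => u x m) ∈ bubbleSpace lam k rv 0 (-1)) (hut : normalTraceZero v u) :
    ∫ x in convexHull ℝ (Set.range v), diverg u x = 0 := by
  choose F hF hFu using fun m => exists_face_decomposition (hu m)
  let h : Fin 4 → Fin 4 → (Fin 3 → ℝ) → ℝ := fun i j x => (lam i).linear fun m => F m j x
  have hspan : ∀ i j, h i j ∈ Submodule.span ℝ
      (bernBary3 lam '' {α | ∀ i, i ≠ j → α i ≠ 0}) := by
    intro i j
    have : h i j = ∑ m, (lam i).linear (Pi.single m 1) • F m j := by
      funext x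
      simp only [h]
      rw [linear_eq_sum_single]
      simp
    rw [this]
    exact Submodule.sum_mem _ fun m _ => Submodule.smul_mem _ _ (hF m j)
  have hC : ∀ i j, ContDiff ℝ 1 (h i j) := fun i j => contDiff_of_mem_span (hspan i j)
  have hvanish : ∀ i j l, l ≠ j → ∀ x, lam l x = 0 → h i j x = 0 := fun i j l hl x hx =>
    eq_zero_of_mem_span (hspan i j) (fun α hα => hα l hl) hx
  have htrace : ∀ j x, (∀ i, 0 ≤ lam i x) → lam j x = 0 → h j j x = 0 := by
    intro j x hx hj
    have hut' := hut j x (mem_face_of_bary_eq_zero hsum hrep hx hj)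
      (fun m => (lam j).linear (Pi.single m 1)) (by
        intro a ha b hb
        have := linear_edge hlam j b a
        rw [linear_eq_sum_single, if_neg ha.symm, if_neg hb.symm, sub_zero] at this
        exact this)
    simp only [h]
    rw [linear_eq_sum_single, ← hut']
    refine Finset.sum_congr rfl fun m _ => ?_
    have : u x m = ∑ i, F m i x := by simpa using congrFun (hFu m) x
    rw [this, Finset.sum_eq_single j]
    · intro i _ hij
      exact eq_zero_of_mem_span (hF m i) (fun α hα => hα j hij.symm) hj
    · simp
  have hFh : ∀ m j, F m j = fun x => ∑ i, (v i - v (j + 1)) m * h i j x := by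
    intro m j
    funext x
    have h1 := congrFun (sum_linear_bary_smul_vertex hrep fun m => F m j x) m
    have h2 := sum_linear_bary hsum fun m => F m j x
    simp only [Finset.sum_apply, Pi.smul_apply, smul_eq_mul] at h1
    simp only [h, Pi.sub_apply, sub_mul, Finset.sum_sub_distrib, ← Finset.mul_sum]
    rw [h2, mul_zero, sub_zero, ← h1]
    exact Finset.sum_congr rfl fun i _ => mul_comm _ _
  have hdF : ∀ m j x w, fderiv ℝ (F m j) x w =
      ∑ i, (v i - v (j + 1)) m * fderiv ℝ (h i j) x w := by
    intro m j x w
    have hd : ∀ i, DifferentiableAt ℝ (h i j) x := fun i => (hC i j).differentiable one_ne_zero x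
    rw [hFh, fderiv_fun_sum fun i _ => (hd i).const_mul _, sum_apply]
    refine Finset.sum_congr rfl fun i _ => ?_
    rw [fderiv_const_mul (hd i)]
    rfl
  have hdiv : ∀ x, diverg u x = ∑ j, ∑ i, fderiv ℝ (h i j) x (v i - v (j + 1)) := by
    intro x
    have hdu : ∀ m, fderiv ℝ (fun y => u y m) x (Pi.single m 1) =
        ∑ j, fderiv ℝ (F m j) x (Pi.single m 1) := by
      intro m
      rw [hFu, fderiv_sum fun j _ =>
        (contDiff_of_mem_span (hF m j)).differentiable one_ne_zero x,
        sum_apply]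
    simp only [diverg, hdu, hdF]
    rw [Finset.sum_comm]
    refine Finset.sum_congr rfl fun j _ => ?_
    rw [Finset.sum_comm]
    exact Finset.sum_congr rfl fun i _ => sum_mul_fderiv_single _ _ _
  have hint : ∀ i j, IntegrableOn (fun x => fderiv ℝ (h i j) x (v i - v (j + 1)))
      (convexHull ℝ (Set.range v)) := fun i j =>
    integrableOn_tetrahedron (((hC i j).continuous_fderiv one_ne_zero).clm_apply continuous_const)
  simp only [hdiv]
  rw [integral_finsetSum _ fun j _ => integrable_finsetSum _ fun i _ => hint i j]
  refine Finset.sum_eq_zero fun j _ => ?_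
  rw [integral_finsetSum _ fun i _ => hint i j]
  refine Finset.sum_eq_zero fun i _ => ?_
  have hj : j + 1 ≠ j := by decide +revert
  by_cases hi : i = j + 1
  · simp [hi]
  refine setIntegral_fderiv_edge_eq_zero hlam hsum hrep (hC i j) (Ne.symm hi)
    (fun x _ hx => hvanish i j _ hj x hx) fun x hx hx0 => ?_
  by_cases hij : i = j
  · subst hij
    exact htrace i x hx hx0
  · exact hvanish i j i hij x hx0

theorem exists_bernBary3_sub_smul_mem_divRange
    (hlam : ∀ i j, lam i (v j) = if i = j then 1 else 0) {k : ℕ} {rv : ℤ} (hrv : 1 ≤ rv)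
    (hk : 2 * rv + 1 ≤ k) {β γ : Fin 4 → ℕ} (hβ : β ∈ interiorLattice (k - 1) (rv - 1) (-1) (-1))
    (hγ : γ ∈ interiorLattice (k - 1) (rv - 1) (-1) (-1)) :
    ∃ c : ℝ, bernBary3 lam γ - c • bernBary3 lam β ∈ divRange v lam k rv := by
  obtain ⟨hβ, hβM⟩ := mem_interiorLattice_neg_one_edge.1 hβ
  obtain ⟨hγ, hγM⟩ := mem_interiorLattice_neg_one_edge.1 hγ
  obtain ⟨M, hM⟩ : ∃ M : ℕ, (M : ℤ) = k - 1 - rv := ⟨(k - 1 - rv).toNat, by omega⟩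
  refine lattice_connected (n := k - 1) (M := M) (by omega)
    (P := fun γ => ∃ c : ℝ, bernBary3 lam γ - c • bernBary3 lam β ∈ divRange v lam k rv)
    ?_ hβ (fun i => by have := hβM i; omega) hγ (fun i => by have := hγM i; omega)
    ⟨1, by simp⟩
  rintro δ hδ hδM b c d hbc hdb hdc hb hc hd ⟨t, ht⟩
  have hαb : (δ + Pi.single c 1 : Fin 4 → ℕ) b = δ b := by simp [hbc]
  have hαc : (δ + Pi.single c 1 : Fin 4 → ℕ) c = δ c + 1 := by simp
  have hαd : (δ + Pi.single c 1 : Fin 4 → ℕ) d = δ d := by simp [hdc]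
  have hα : δ + Pi.single c 1 ∈ interiorLattice k rv 0 (-1) := by
    rw [mem_interiorLattice_zero_edge]
    refine ⟨?_, fun i => ?_, fun i j hij => ?_⟩
    · simp only [Pi.add_apply, Finset.sum_add_distrib, hδ, Finset.sum_pi_single', Finset.mem_univ,
        if_true]
      omega
    · by_cases hi : i = c
      · subst hi; omega
      · have := hδM i
        rw [Pi.add_apply, Pi.single_eq_of_ne hi]
        omega
    · by_contra! h0
      have hne : ∀ l, (δ + Pi.single c 1 : Fin 4 → ℕ) l = 0 → l ≠ b ∧ l ≠ c ∧ l ≠ d := fun l hl =>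
        ⟨by rintro rfl; omega, by rintro rfl; omega, by rintro rfl; omega⟩
      have h1 := hne i h0.1
      have h2 := hne j h0.2
      omega
  have hgen := edge_difference_mem_divRange hlam hα (a := c) (b := b) (by omega) (by omega)
  rw [hαb, hαc, add_tsub_cancel_right] at hgen
  have hb0 : (δ b : ℝ) ≠ 0 := by positivity
  refine ⟨(δ b : ℝ)⁻¹ * (δ c + 1 : ℕ) * t, ?_⟩
  have := Submodule.add_mem _ (Submodule.smul_mem _ (δ b : ℝ)⁻¹ hgen)
    (Submodule.smul_mem _ ((δ b : ℝ)⁻¹ * (δ c + 1 : ℕ)) ht)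
  convert this using 1
  rw [smul_sub, smul_smul, inv_mul_cancel₀ hb0, one_smul]
  simp only [shiftUnit]
  module

end Bubble

/-- div stability of the `H(div)` bubble space for `r₂ = (rᵛ, 0, −1)`,
`rᵛ ≥ 1`, `k ≥ 2rᵛ + 1` and `r₃ = r₂ ⊖ 1 = (rᵛ−1, −1, −1)`:
`div 𝔹ᵈⁱᵛ_k(T; r₂) = 𝔹_{k−1}(T; r₃)/ℝ`, where
`𝔹ᵈⁱᵛ_k(T; r₂) = {u ∈ 𝔹³_k(T; r₂) : u ⋅ n = 0 on ∂T}`. -/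
theorem div_bubble_stability_re_zero
    (v : Fin 4 → (Fin 3 → ℝ)) (hv : AffineIndependent ℝ v)
    (lam : Fin 4 → ((Fin 3 → ℝ) →ᵃ[ℝ] ℝ))
    (hlam : ∀ i j, lam i (v j) = if i = j then 1 else 0)
    (hsum : ∀ x : Fin 3 → ℝ, ∑ i, lam i x = 1)
    (rv : ℤ) (hrv : 1 ≤ rv)
    (k : ℕ) (hk : 2 * rv + 1 ≤ (k : ℤ))
    (hS : (interiorLattice (k - 1) (rv - 1) (-1) (-1)).Nonempty) :
    {p : (Fin 3 → ℝ) → ℝ | ∃ u : (Fin 3 → ℝ) → (Fin 3 → ℝ),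
        (∀ m : Fin 3, (fun x => u x m) ∈ bubbleSpace lam k rv 0 (-1)) ∧
        normalTraceZero v u ∧ p = diverg u}
      = {p : (Fin 3 → ℝ) → ℝ |
          p ∈ bubbleSpace lam (k - 1) (rv - 1) (-1) (-1) ∧
          (∫ x in convexHull ℝ (Set.range v), p x) = 0} := by
  have hrep := sum_bary_smul_vertex hv hlam
  ext p
  constructor
  · rintro ⟨u, hu, hut, rfl⟩
    exact ⟨diverg_mem_bubbleSpace hu, setIntegral_diverg_eq_zero hlam hsum hrep hu hut⟩
  · rintro ⟨hp, hint⟩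
    obtain ⟨β, hβ⟩ := hS
    have hle : bubbleSpace lam (k - 1) (rv - 1) (-1) (-1) ≤
        divRange v lam k rv ⊔ Submodule.span ℝ {bernBary3 lam β} := by
      refine Submodule.span_le.2 ?_
      rintro _ ⟨γ, hγ, rfl⟩
      obtain ⟨c, hc⟩ := exists_bernBary3_sub_smul_mem_divRange hlam hrv hk hβ hγ
      exact Submodule.mem_sup.2 ⟨_, hc, _,
        Submodule.smul_mem _ c (Submodule.mem_span_singleton_self _), by simp⟩
    obtain ⟨q, hq, z, hz, rfl⟩ := Submodule.mem_sup.1 (hle hp)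
    obtain ⟨c, rfl⟩ := Submodule.mem_span_singleton.1 hz
    obtain ⟨u, hu, hut, rfl⟩ := id hq
    have hcont : Continuous (diverg u) :=
      (contDiff_of_mem_span (diverg_mem_bubbleSpace hu)).continuous
    have hbern : Continuous (bernBary3 lam β) := (contDiff_bernBary3 β).continuous
    simp only [Pi.add_apply, Pi.smul_apply] at hint
    rw [integral_add (integrableOn_tetrahedron hcont)
      (integrableOn_tetrahedron (f := fun x => c • bernBary3 lam β x) (hbern.const_smul c)),
      setIntegral_diverg_eq_zero hlam hsum hrep hu hut, zero_add, integral_smul, smul_eq_mul] at hint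
    have hc : c = 0 := (mul_eq_zero.1 hint).resolve_right
      (setIntegral_bernBary3_pos hlam hsum hrep β).ne'
    rw [hc, zero_smul, add_zero]
    exact hq
end

section
/- Let u : ℝ³ → ℝ³ be continuously differentiable, let n ∈ ℝ³ be a unit vector, and let x ∈ ℝ³. Write Π w = w − (w·n)·n for the projection onto the plane orthogonal to n, ∂_n for the directional derivative along n, and ∇_f v = ∇v − (∂_n v)·n for the tangential gradient of a scalar function v. Then at the point x: (i) n·(curl u) = n·(curl(Π∘u)), i.e. the normal component of curl u depends only on the tangential part of u; and (ii) n × (curl u) = ∇_f(u·n) − ∂_n(Π∘u), where curl u = ∇ × u. -/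
open scoped BigOperators

/-- The partial derivative `∂_i g` in the `i`-th standard coordinate direction. -/
noncomputable def pd3 (i : Fin 3) (g : (Fin 3 → ℝ) → ℝ) (x : Fin 3 → ℝ) : ℝ :=
  fderiv ℝ g x (Pi.single i 1)

/-- The curl `∇ × u = (∂₂u₃ − ∂₃u₂, ∂₃u₁ − ∂₁u₃, ∂₁u₂ − ∂₂u₁)` (0-based indices). -/
noncomputable def curl3 (u : (Fin 3 → ℝ) → (Fin 3 → ℝ)) (x : Fin 3 → ℝ) : Fin 3 → ℝ :=
  ![pd3 1 (fun y => u y 2) x - pd3 2 (fun y => u y 1) x,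
    pd3 2 (fun y => u y 0) x - pd3 0 (fun y => u y 2) x,
    pd3 0 (fun y => u y 1) x - pd3 1 (fun y => u y 0) x]

/-- The Euclidean dot product on `ℝ³`. -/
def dot3 (a b : Fin 3 → ℝ) : ℝ := ∑ i, a i * b i

/-- The tangential projection `Π w = w − (w⋅n) n` onto the plane orthogonal to `n`. -/
def tangProj (nvec w : Fin 3 → ℝ) : Fin 3 → ℝ := w - (dot3 w nvec) • nvec

/-- The differential of `y ↦ u y ⋅ n` is the dot product of the differential of `u` with `n`. -/
theorem fderiv_dot3_apply {u : (Fin 3 → ℝ) → (Fin 3 → ℝ)} {x : Fin 3 → ℝ}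
    (hu : DifferentiableAt ℝ u x) (nvec v : Fin 3 → ℝ) :
    fderiv ℝ (fun y => dot3 (u y) nvec) x v = dot3 (fderiv ℝ u x v) nvec := by
  have h : HasFDerivAt (fun y => dot3 (u y) nvec)
      (∑ i, nvec i • (ContinuousLinearMap.proj i).comp (fderiv ℝ u x)) x :=
    HasFDerivAt.fun_sum fun i _ => (hasFDerivAt_pi'.1 hu.hasFDerivAt i).mul_const (nvec i)
  rw [h.fderiv]
  simp [dot3, mul_comm]

/-- The differential of a component is the component of the differential. -/
theorem pd3_component {u : (Fin 3 → ℝ) → (Fin 3 → ℝ)} {x : Fin 3 → ℝ}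
    (hu : DifferentiableAt ℝ u x) (i j : Fin 3) :
    pd3 i (fun y => u y j) x = fderiv ℝ u x (Pi.single i 1) j := by
  rw [pd3, (hasFDerivAt_pi'.1 hu.hasFDerivAt j).fderiv]
  rfl

theorem differentiableAt_dot3 {u : (Fin 3 → ℝ) → (Fin 3 → ℝ)} {x : Fin 3 → ℝ}
    (hu : DifferentiableAt ℝ u x) (nvec : Fin 3 → ℝ) :
    DifferentiableAt ℝ (fun y => dot3 (u y) nvec) x := by
  unfold dot3
  fun_prop

theorem differentiableAt_tangProj {u : (Fin 3 → ℝ) → (Fin 3 → ℝ)} {x : Fin 3 → ℝ}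
    (hu : DifferentiableAt ℝ u x) (nvec : Fin 3 → ℝ) :
    DifferentiableAt ℝ (fun y => tangProj nvec (u y)) x :=
  hu.sub ((differentiableAt_dot3 hu nvec).smul_const nvec)

/-- The tangential projection commutes with differentiation. -/
theorem fderiv_tangProj_apply {u : (Fin 3 → ℝ) → (Fin 3 → ℝ)} {x : Fin 3 → ℝ}
    (hu : DifferentiableAt ℝ u x) (nvec v : Fin 3 → ℝ) :
    fderiv ℝ (fun y => tangProj nvec (u y)) x v = tangProj nvec (fderiv ℝ u x v) := by
  have h : HasFDerivAt (fun y => tangProj nvec (u y)) _ x :=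
    hu.hasFDerivAt.sub ((differentiableAt_dot3 hu nvec).hasFDerivAt.smul_const nvec)
  rw [h.fderiv]
  simp [tangProj, fderiv_dot3_apply hu]

/-- A linear map on `ℝ³` is determined by its values on the standard basis. -/
theorem clm_apply_eq_sum_single (L : (Fin 3 → ℝ) →L[ℝ] (Fin 3 → ℝ)) (v : Fin 3 → ℝ) :
    L v = ∑ i, v i • L (Pi.single i 1) := by
  conv_lhs => rw [pi_eq_sum_univ' v]
  simp [map_sum, map_smul]

/-- for a `C¹` vector field `u` on `ℝ³` and a unit vector `n`:
(i) the normal component of `curl u` depends only on the tangential part of `u`,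
`n ⋅ (curl u) = n ⋅ (curl (Π ∘ u))`; and
(ii) `n × (curl u) = ∇_f (u⋅n) − ∂_n (Π ∘ u)`, where `∇_f v = ∇v − (∂_n v) n` is the
tangential gradient and `∂_n` is the directional derivative along `n`. -/
theorem curl_tangential_normal_identities
    (u : (Fin 3 → ℝ) → (Fin 3 → ℝ)) (hu : ContDiff ℝ 1 u)
    (nvec : Fin 3 → ℝ) (hn : ∑ i, (nvec i) ^ 2 = 1) (x : Fin 3 → ℝ) :
    dot3 nvec (curl3 u x) = dot3 nvec (curl3 (fun y => tangProj nvec (u y)) x) ∧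
    crossProduct nvec (curl3 u x)
      = ((fun i => pd3 i (fun y => dot3 (u y) nvec) x)
            - (fderiv ℝ (fun y => dot3 (u y) nvec) x nvec) • nvec)
        - fderiv ℝ (fun y => tangProj nvec (u y)) x nvec := by
  have hd : DifferentiableAt ℝ u x := hu.differentiable one_ne_zero x
  have ht := differentiableAt_tangProj hd nvec
  constructor
  · simp only [curl3, pd3_component hd, pd3_component ht, fderiv_tangProj_apply hd]
    simp only [dot3, tangProj, Fin.sum_univ_three, Pi.sub_apply, Pi.smul_apply, smul_eq_mul,
      Matrix.cons_val]
    ring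
  · simp only [curl3, pd3_component hd, fderiv_tangProj_apply hd]
    simp only [pd3, fderiv_dot3_apply hd, clm_apply_eq_sum_single _ nvec]
    ext i
    fin_cases i <;>
    · simp [crossProduct, dot3, tangProj, Fin.sum_univ_three]
      ring
end
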